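/- Let G be the parallel composition of r ≥ 2 paths of lengths k_1,...,k_r, where the integers k_1,...,k_r all have the same parity, and let X be the projective toric subset parameterized by G. If all k_i are odd, then reg(G) ≥ (⌊k_1/2⌋ + ... + ⌊k_r/2⌋)(q−2); if all k_i are even, then reg(G) ≥ (k_1/2 + ... + k_r/2 − 1)(q−2). -/

import Mathlib

open MvPolynomial

/-- A finite multigraph without loops: each edge `e` has two distinct endpoints
`fst e` and `snd e`.  Multiple edges with the same endpoints are allowed. -/
structure Multigraph (V E : Type) : Type where
  fst : E → V
  snd : E → V
  ne : ∀ e, fst e ≠ snd e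

namespace Multigraph

variable {V E : Type}

/-- Vertex `v` is an endpoint of the edge `e`. -/
def Incident (G : Multigraph V E) (v : V) (e : E) : Prop :=
  G.fst e = v ∨ G.snd e = v

instance (G : Multigraph V E) [DecidableEq V] (v : V) : DecidablePred (G.Incident v) :=
  fun e => inferInstanceAs (Decidable (G.fst e = v ∨ G.snd e = v))

/-- The degree of a vertex: the number of edges incident to it. -/
noncomputable def degree (G : Multigraph V E) (v : V) : ℕ :=
  Nat.card {e : E // G.Incident v e}

/-- The graph has no isolated vertices. -/
def NoIsolated (G : Multigraph V E) : Prop :=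
  ∀ v : V, ∃ e : E, G.Incident v e

variable (K : Type) [Field K] [Fintype K]

/-- The point of the affine torus associated with an assignment `x` of nonzero
scalars to the vertices: its coordinate at an edge `e = {v,w}` is `x v * x w`. -/
def point (G : Multigraph V E) (x : V → Kˣ) : E → K :=
  fun e => (x (G.fst e) : K) * (x (G.snd e) : K)

/-- The projective toric subset `X` parameterized by `G`, realized as the set of
`Kˣ`-orbits (i.e. projective points) of the points `G.point K x`, `x : V → Kˣ`. -/
def toricSet (G : Multigraph V E) : Set (Set (E → K)) :=
  Set.range fun x : V → Kˣ => MulAction.orbit Kˣ (G.point K x)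

/-- The vanishing ideal `I(X)` of the projective toric subset parameterized by `G`:
the ideal of all polynomials each of whose homogeneous components vanishes at the
point `G.point K x` for every `x : V → Kˣ`. -/
def vanishingIdeal (G : Multigraph V E) : Ideal (MvPolynomial E K) where
  carrier := {f | ∀ (x : V → Kˣ) (d : ℕ), eval (G.point K x) (homogeneousComponent d f) = 0}
  zero_mem' := by intro x d; simp
  add_mem' := by
    intro a b ha hb x d
    rw [map_add, map_add, ha x d, hb x d, add_zero]
  smul_mem' := by
    intro c f hf x n
    rw [smul_eq_mul, ← sum_homogeneousComponent f, Finset.mul_sum, map_sum, map_sum]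
    refine Finset.sum_eq_zero fun d _ => ?_
    nth_rewrite 1 [← sum_homogeneousComponent c]
    rw [Finset.sum_mul, map_sum, map_sum]
    refine Finset.sum_eq_zero fun e _ => ?_
    have h1 : (homogeneousComponent e c * homogeneousComponent d f).IsHomogeneous (e + d) :=
      (homogeneousComponent_isHomogeneous e c).mul (homogeneousComponent_isHomogeneous d f)
    rw [homogeneousComponent_of_mem ((mem_homogeneousSubmodule _ _).mpr h1)]
    split_ifs
    · rw [map_mul, hf x d, mul_zero]
    · simp

/-- The Hilbert function of `S/I(X)`: the dimension over `K` of the degree-`d`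
homogeneous component of the quotient, realized as the image of the space of
degree-`d` homogeneous polynomials in the quotient. -/
noncomputable def hilbert (G : Multigraph V E) (d : ℕ) : ℕ :=
  Module.finrank K
    ((homogeneousSubmodule E K d).map (Ideal.Quotient.mkₐ K (G.vanishingIdeal K)).toLinearMap)

/-- The regularity `reg G`: the least `d` such that the Hilbert function of `S/I(X)`
at `d` equals the number of points of `X`. -/
noncomputable def reg (G : Multigraph V E) : ℕ :=
  sInf {d : ℕ | G.hilbert K d = (G.toricSet K).ncard}

/-- The graph obtained from `G` by deleting a vertex `v` and all edges incident
to it. -/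
def deleteVert (G : Multigraph V E) (v : V) :
    Multigraph {w : V // w ≠ v} {e : E // ¬ G.Incident v e} where
  fst e := ⟨G.fst e.1, fun h => e.2 (Or.inl h)⟩
  snd e := ⟨G.snd e.1, fun h => e.2 (Or.inr h)⟩
  ne e h := G.ne e.1 (congrArg Subtype.val h)

/-- The graph obtained from `G` by identifying the vertex `v₂` with the vertex `v₁`:
the edges are the same, and every endpoint equal to `v₂` is replaced by `v₁`.
This requires that `{v₁, v₂}` is a non-edge of `G`, so that no loops are created. -/
def identifyVert [DecidableEq V] (G : Multigraph V E) (v₁ v₂ : V) (h12 : v₁ ≠ v₂)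
    (h : ∀ e, ¬ (G.Incident v₁ e ∧ G.Incident v₂ e)) :
    Multigraph {w : V // w ≠ v₂} E where
  fst e := ⟨if G.fst e = v₂ then v₁ else G.fst e, by split_ifs with hh; exacts [h12, hh]⟩
  snd e := ⟨if G.snd e = v₂ then v₁ else G.snd e, by split_ifs with hh; exacts [h12, hh]⟩
  ne := by
    intro e heq
    rw [Subtype.ext_iff] at heq
    simp only at heq
    split_ifs at heq with h1 h2 h2
    · exact G.ne e (h1.trans h2.symm)
    · exact h e ⟨Or.inr heq.symm, Or.inl h1⟩
    · exact h e ⟨Or.inl heq, Or.inr h2⟩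
    · exact G.ne e heq

/-- The subgraph of `G` determined by a set `A` of edges of `G`, together with all
endpoints of those edges (so it has no isolated vertices). -/
def subgraph [DecidableEq V] (G : Multigraph V E) (A : Finset E) :
    Multigraph {v : V // ∃ e ∈ A, G.Incident v e} {e : E // e ∈ A} where
  fst e := ⟨G.fst e.1, e.1, e.2, Or.inl rfl⟩
  snd e := ⟨G.snd e.1, e.1, e.2, Or.inr rfl⟩
  ne e h := G.ne e.1 (congrArg Subtype.val h)

end Multigraph

/-- The vertex of the parallel composition of paths of lengths `k i` lying on the
`i`-th path at distance `j` from the common initial vertex:  `j = 0` gives the common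
initial vertex, `j = k i` the common terminal vertex, and `0 < j < k i` gives the
`j`-th interior vertex of the `i`-th path. -/
def pcVert {ι : Type} (k : ι → ℕ) (i : ι) (j : ℕ) :
    Bool ⊕ ((i : ι) × Fin (k i - 1)) :=
  if h0 : j = 0 then Sum.inl false
  else if h : j < k i then Sum.inr ⟨i, ⟨j - 1, by omega⟩⟩
  else Sum.inl true

/-- The parallel composition of the family of paths `P i` of lengths `k i` (`i : ι`):
the `i`-th path has `k i` edges indexed by `Fin (k i)`, its `j`-th edge joining the
vertices of the `i`-th path at distances `j` and `j + 1` from the common initial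
vertex.  All the initial vertices of the paths are identified to a single vertex and
all the terminal vertices are identified to a single vertex. -/
def parallelComp {ι : Type} (k : ι → ℕ) :
    Multigraph (Bool ⊕ ((i : ι) × Fin (k i - 1))) ((i : ι) × Fin (k i)) where
  fst e := pcVert k e.1 e.2.1
  snd e := pcVert k e.1 (e.2.1 + 1)
  ne := by
    rintro ⟨i, j⟩ h
    have hj := j.2
    simp only [pcVert] at h
    split_ifs at h <;> simp_all <;> omega

/-- The monomial `f i`: the product of the edges of the `i`-th path of the parallel
composition in odd positions (positions `1, 3, 5, ...`, i.e. indices `0, 2, 4, ...`). -/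
noncomputable def oddProd {ι : Type} (K : Type) [Field K] (k : ι → ℕ) (i : ι) :
    MvPolynomial ((i : ι) × Fin (k i)) K :=
  ∏ m : Fin ((k i + 1) / 2), X ⟨i, ⟨2 * m.1, by have := m.2; omega⟩⟩

/-- The monomial `g i`: the product of the edges of the `i`-th path of the parallel
composition in even positions (positions `2, 4, 6, ...`, i.e. indices `1, 3, 5, ...`). -/
noncomputable def evenProd {ι : Type} (K : Type) [Field K] (k : ι → ℕ) (i : ι) :
    MvPolynomial ((i : ι) × Fin (k i)) K :=
  ∏ m : Fin (k i / 2), X ⟨i, ⟨2 * m.1 + 1, by have := m.2; omega⟩⟩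

namespace RegAux

section General

variable {V E : Type} (K : Type) [Field K] [Fintype K] (G : Multigraph V E)

/-- A chosen representative of a point of the toric set. -/
noncomputable def rep (P : G.toricSet K) : V → Kˣ := Classical.choose P.2

lemma rep_spec (P : G.toricSet K) : MulAction.orbit Kˣ (G.point K (rep K G P)) = P.1 :=
  Classical.choose_spec P.2

/-- Evaluation at the chosen representatives. -/
noncomputable def evMap : MvPolynomial E K →ₗ[K] (G.toricSet K → K) :=
  LinearMap.pi fun P => (aeval (R := K) (G.point K (rep K G P))).toLinearMap

lemma evMap_apply (f : MvPolynomial E K) (P : G.toricSet K) :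
    evMap K G f P = eval (G.point K (rep K G P)) f := by
  simp [evMap, aeval_eq_eval]

lemma exists_scal (x : V → Kˣ) : ∃ (P : G.toricSet K) (c : Kˣ),
    G.point K x = c • G.point K (rep K G P) := by
  refine ⟨⟨_, x, rfl⟩, ?_⟩
  have h := rep_spec K G ⟨_, x, rfl⟩
  have h2 : G.point K x ∈ MulAction.orbit Kˣ (G.point K (rep K G ⟨_, x, rfl⟩)) := by
    rw [h]; exact MulAction.mem_orbit_self _
  obtain ⟨c, hc⟩ := h2
  exact ⟨c, hc.symm⟩

lemma eval_scal {d : ℕ} {f : MvPolynomial E K} (hf : f.IsHomogeneous d) (c : Kˣ) (t : E → K) :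
    eval (c • t) f = (c : K) ^ d * eval t f := by
  rw [eval_eq, eval_eq, Finset.mul_sum]
  refine Finset.sum_congr rfl fun m hm => ?_
  have hd : m.degree = d := by
    have := hf (mem_support_iff.mp hm)
    rw [Finsupp.degree_eq_weight_one]; exact this
  have : ∏ i ∈ m.support, (c • t) i ^ m i = (c : K) ^ d * ∏ i ∈ m.support, t i ^ m i := by
    rw [← hd, Finsupp.degree_apply, ← Finset.prod_pow_eq_pow_sum, ← Finset.prod_mul_distrib]
    refine Finset.prod_congr rfl fun i _ => ?_
    rw [Pi.smul_apply, Units.smul_def, smul_eq_mul, mul_pow]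
  rw [this]; ring

lemma mem_ideal_iff {d : ℕ} {f : MvPolynomial E K} (hf : f.IsHomogeneous d) :
    f ∈ G.vanishingIdeal K ↔ evMap K G f = 0 := by
  constructor
  · intro h
    funext P
    rw [evMap_apply]
    have := h (rep K G P) d
    rw [homogeneousComponent_of_mem ((mem_homogeneousSubmodule _ _).mpr hf), if_pos rfl] at this
    simpa using this
  · intro h x n
    rw [homogeneousComponent_of_mem ((mem_homogeneousSubmodule _ _).mpr hf)]
    split_ifs
    · obtain ⟨P, c, hc⟩ := exists_scal K G x
      rw [hc, eval_scal K hf, ← evMap_apply, h]; simp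
    · simp

variable [Fintype V] [Fintype E]

lemma hilbert_eq (d : ℕ) : G.hilbert K d =
    Module.finrank K ((homogeneousSubmodule E K d).map (evMap K G)) := by
  set A := (Ideal.Quotient.mkₐ K (G.vanishingIdeal K)).toLinearMap
  set S := homogeneousSubmodule E K d
  have hker : LinearMap.ker (A.domRestrict S) = LinearMap.ker ((evMap K G).domRestrict S) := by
    ext ⟨f, hf⟩
    rw [LinearMap.mem_ker, LinearMap.mem_ker, LinearMap.domRestrict_apply,
      LinearMap.domRestrict_apply]
    rw [← mem_ideal_iff K G ((mem_homogeneousSubmodule _ _).mp hf)]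
    exact Ideal.Quotient.eq_zero_iff_mem
  have h1 : LinearMap.range (A.domRestrict S) = S.map A := LinearMap.range_domRestrict _ _
  have h2 : LinearMap.range ((evMap K G).domRestrict S) = S.map (evMap K G) :=
    LinearMap.range_domRestrict _ _
  unfold Multigraph.hilbert
  rw [← h1, ← h2]
  exact LinearEquiv.finrank_eq ((A.domRestrict S).quotKerEquivRange.symm.trans
    ((Submodule.quotEquivOfEq _ _ hker).trans ((evMap K G).domRestrict S).quotKerEquivRange))

lemma toric_finite : (G.toricSet K).Finite := Set.finite_range _

lemma hilbert_eq_card_iff (d : ℕ) : G.hilbert K d = (G.toricSet K).ncard ↔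
    (homogeneousSubmodule E K d).map (evMap K G) = ⊤ := by
  have : Fintype (G.toricSet K) := (toric_finite K G).fintype
  have hc : (G.toricSet K).ncard = Module.finrank K (G.toricSet K → K) := by
    rw [Module.finrank_fintype_fun_eq_card, ← Nat.card_coe_set_eq, Nat.card_eq_fintype_card]
  rw [hilbert_eq, hc]
  constructor
  · exact Submodule.eq_top_of_finrank_eq
  · intro h; rw [h, finrank_top]

lemma point_ne (x : V → Kˣ) (e : E) : G.point K x e ≠ 0 := by
  simp [Multigraph.point]

lemma exists_sep (P Q : G.toricSet K) (h : P ≠ Q) : ∃ f : MvPolynomial E K, f.IsHomogeneous 1 ∧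
    eval (G.point K (rep K G Q)) f = 0 ∧ eval (G.point K (rep K G P)) f ≠ 0 := by
  by_contra! hcon
  apply h
  apply Subtype.ext
  rw [← rep_spec K G P, ← rep_spec K G Q, MulAction.orbit_eq_iff]
  set p := G.point K (rep K G P) with hp
  set u := G.point K (rep K G Q) with hu
  have key : ∀ e e2, u e * p e2 = u e2 * p e := by
    intro e e2
    have := hcon (C (u e) * X e2 - C (u e2) * X e) (by
      apply IsHomogeneous.sub
      · simpa using (isHomogeneous_C E (u e)).mul (isHomogeneous_X K e2)
      · simpa using (isHomogeneous_C E (u e2)).mul (isHomogeneous_X K e)) (by simp; ring)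
    simpa [sub_eq_zero] using this
  rcases isEmpty_or_nonempty E with hE | ⟨⟨e0⟩⟩
  · exact ⟨1, Subsingleton.elim _ _⟩
  · refine ⟨Units.mk0 (p e0 / u e0) (div_ne_zero (point_ne K G _ _) (point_ne K G _ _)), ?_⟩
    funext e
    have h0 : u e0 ≠ 0 := point_ne K G _ _
    simp only [Pi.smul_apply, Units.smul_def, Units.val_mk0, smul_eq_mul]
    field_simp
    linear_combination key e e0

lemma exists_deg : ∃ d, G.hilbert K d = (G.toricSet K).ncard := by
  classical
  have : Fintype (G.toricSet K) := (toric_finite K G).fintype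
  refine ⟨Fintype.card (G.toricSet K) - 1, (hilbert_eq_card_iff K G _).2 ?_⟩
  have hsep : ∀ P Q : G.toricSet K, ∃ f : MvPolynomial E K, P ≠ Q → (f.IsHomogeneous 1 ∧
    eval (G.point K (rep K G Q)) f = 0 ∧ eval (G.point K (rep K G P)) f ≠ 0) := by
    intro P Q
    by_cases h : P = Q
    · exact ⟨0, fun h2 => absurd h h2⟩
    · obtain ⟨f, hf⟩ := exists_sep K G P Q h
      exact ⟨f, fun _ => hf⟩
  choose s hs using hsep
  rw [eq_top_iff]
  intro φ _
  have hφ : φ = ∑ P, φ P • (Pi.single P (1 : K)) := by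
    funext Q
    simp [Finset.sum_apply, Pi.single_apply]
  rw [hφ]
  refine Submodule.sum_mem _ fun P _ => Submodule.smul_mem _ _ ?_
  set g := ∏ Q ∈ Finset.univ.erase P, s P Q with hg
  have hgh : g.IsHomogeneous (Fintype.card (G.toricSet K) - 1) := by
    have := IsHomogeneous.prod (Finset.univ.erase P) (s P) (fun _ => 1)
      (fun Q hQ => (hs P Q (Finset.ne_of_mem_erase hQ).symm).1)
    simpa [Finset.card_erase_of_mem, Finset.card_univ] using this
  have hgP : eval (G.point K (rep K G P)) g ≠ 0 := by
    rw [hg, map_prod, Finset.prod_ne_zero_iff]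
    exact fun Q hQ => (hs P Q (Finset.ne_of_mem_erase hQ).symm).2.2
  have : Pi.single P (1 : K) = (eval (G.point K (rep K G P)) g)⁻¹ • evMap K G g := by
    funext Q
    rw [Pi.smul_apply, evMap_apply]
    by_cases h : Q = P
    · subst h; simp [hgP]
    · have h0 : eval (G.point K (rep K G Q)) g = 0 := by
        rw [hg, map_prod]
        exact Finset.prod_eq_zero (i := Q) (by simp [h]) (hs P Q (Ne.symm h)).2.1
      simp [h0, h]
  rw [this]
  exact Submodule.smul_mem _ _ (Submodule.mem_map_of_mem hgh)

lemma main_bound {L : Type} [Fintype L] (l : E → L) (hl : Function.Surjective l)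
    (hx : ∀ y : L → Kˣ, ∃ x : V → Kˣ, ∀ e, x (G.fst e) * x (G.snd e) = y (l e)) :
    (Fintype.card L - 1) * (Fintype.card K - 2) ≤ G.reg K := by
  classical
  rcases isEmpty_or_nonempty L with hL | ⟨⟨v0⟩⟩
  · simp
  refine le_csInf (exists_deg K G) ?_
  intro d hd
  by_contra! hlt
  have htop := (hilbert_eq_card_iff K G d).1 hd
  choose e he using hl
  set n := Fintype.card L - 1 with hn
  have hcard : (Finset.univ.erase v0).card = n := by
    rw [Finset.card_erase_of_mem (Finset.mem_univ _), Finset.card_univ]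
  let F : (E → K) → K := fun t => t (e v0) ^ (d + n) * ∏ v ∈ Finset.univ.erase v0, (t (e v))⁻¹
  have hF : ∀ (c : Kˣ) t, F (c • t) = (c : K) ^ d * F t := by
    intro c t
    have hc : (c : K) ≠ 0 := c.ne_zero
    simp only [F, Pi.smul_apply, Units.smul_def, smul_eq_mul, mul_inv, Finset.prod_mul_distrib,
      Finset.prod_const, hcard]
    rw [mul_pow, pow_add, inv_pow]
    field_simp
  obtain ⟨f, hfh, hf⟩ : (fun P => F (G.point K (rep K G P))) ∈
    (homogeneousSubmodule E K d).map (evMap K G) := by rw [htop]; trivial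
  have hfh : f.IsHomogeneous d := hfh
  have hev : ∀ x : V → Kˣ, eval (G.point K x) f = F (G.point K x) := by
    intro x
    obtain ⟨P, c, hc⟩ := exists_scal K G x
    rw [hc, eval_scal K hfh, hF, ← evMap_apply, hf]
  have hev2 : ∀ y : L → Kˣ, eval (fun e => (y (l e) : K)) f = F (fun e => (y (l e) : K)) := by
    intro y
    obtain ⟨x, hxy⟩ := hx y
    have : G.point K x = fun e => (y (l e) : K) := by
      funext e
      simp [Multigraph.point, ← hxy e]
    rw [← this, hev]
  -- the dual character
  let W : (L → Kˣ) → K := fun y => ∏ v, ((y v : K) ^ (if v = v0 then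
    (d + n) * (Fintype.card K - 2) else 1))
  have hq : 2 ≤ Fintype.card K := Fintype.one_lt_card
  have hpow : ∀ u : Kˣ, (u : K) ^ (Fintype.card K - 1) = 1 := fun u =>
    FiniteField.pow_card_sub_one_eq_one _ u.ne_zero
  have hFW : ∀ y : L → Kˣ, F (fun e => (y (l e) : K)) * W y = 1 := by
    intro y
    have h0 : ∀ v, (y v : K) ≠ 0 := fun v => (y v).ne_zero
    simp only [F, W, he]
    rw [← Finset.mul_prod_erase Finset.univ _ (Finset.mem_univ v0), if_pos rfl]
    have h1 : ∏ v ∈ Finset.univ.erase v0, (y v : K) ^ (if v = v0 then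
        (d + n) * (Fintype.card K - 2) else 1) = ∏ v ∈ Finset.univ.erase v0, (y v : K) :=
      Finset.prod_congr rfl fun v hv => by rw [if_neg (Finset.ne_of_mem_erase hv), pow_one]
    rw [h1, mul_mul_mul_comm, ← Finset.prod_mul_distrib, ← pow_add]
    have h2 : d + n + (d + n) * (Fintype.card K - 2) = (Fintype.card K - 1) * (d + n) := by
      obtain ⟨m, hm⟩ := Nat.exists_eq_add_of_le hq
      rw [hm, show 2 + m - 2 = m by omega, show 2 + m - 1 = m + 1 by omega]; ring
    rw [h2, pow_mul, hpow, one_pow, one_mul]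
    exact Finset.prod_eq_one fun v _ => inv_mul_cancel₀ (h0 v)
  have hsum1 : ∑ y : L → Kˣ, eval (fun e => (y (l e) : K)) f * W y ≠ 0 := by
    simp_rw [hev2, hFW]
    rw [Finset.sum_const, Finset.card_univ, Fintype.card_fun, Fintype.card_units, nsmul_one]
    push_cast [Nat.cast_sub (show 1 ≤ Fintype.card K by omega)]
    rw [FiniteField.cast_card_eq_zero]
    simp
  apply hsum1
  simp_rw [eval_eq', Finset.sum_mul]
  rw [Finset.sum_comm]
  refine Finset.sum_eq_zero fun m hm => ?_
  have hmd : ∑ i, m i = d := by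
    have := hfh (mem_support_iff.mp hm)
    rw [← Finsupp.degree_eq_sum, Finsupp.degree_eq_weight_one]; exact this
  simp_rw [mul_assoc]
  rw [← Finset.mul_sum]
  convert mul_zero _
  let b : L → ℕ := fun v => ∑ i with l i = v, m i
  have hb : ∑ v, b v = d := by
    rw [← hmd]; exact Finset.sum_fiberwise _ _ _
  obtain ⟨v1, hv1, hbv⟩ : ∃ v ∈ Finset.univ.erase v0, b v < Fintype.card K - 2 := by
    by_contra! hge
    have h1 := Finset.card_nsmul_le_sum (Finset.univ.erase v0) b _ hge
    have h2 : ∑ v ∈ Finset.univ.erase v0, b v ≤ ∑ v, b v :=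
      Finset.sum_le_sum_of_subset (Finset.erase_subset _ _)
    rw [hcard, smul_eq_mul] at h1
    exact absurd (h1.trans (h2.trans hb.le)) (not_le.2 hlt)
  have hv10 := Finset.ne_of_mem_erase hv1
  let a : L → ℕ := fun v => b v + (if v = v0 then (d + n) * (Fintype.card K - 2) else 1)
  have hprod : ∀ y : L → Kˣ, (∏ i, (y (l i) : K) ^ m i) * W y = ∏ v, ((y v : K) ^ a v) := by
    intro y
    simp only [W, a, pow_add, Finset.prod_mul_distrib]
    congr 1
    rw [← Finset.prod_fiberwise Finset.univ l]
    refine Finset.prod_congr rfl fun v _ => ?_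
    rw [← Finset.prod_pow_eq_pow_sum]
    refine Finset.prod_congr rfl fun i hi => ?_
    rw [(Finset.mem_filter.1 hi).2]
  simp_rw [hprod]
  rw [← Fintype.prod_sum (fun v (u : Kˣ) => (u : K) ^ a v)]
  refine Finset.prod_eq_zero (Finset.mem_univ v1) ?_
  have := FiniteField.sum_pow_units K (a v1)
  rw [this, if_neg]
  simp only [a, if_neg hv10]
  intro hdvd
  have := Nat.le_of_dvd (by omega) hdvd
  omega

end General

end RegAux

/-- **Lemma 3.1.**  Let `G` be the parallel composition of `r ≥ 2` paths of lengths
`k 0, ..., k (r-1)`, all of the same parity.  If all `k i` are odd then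
`reg G ≥ (⌊k 0/2⌋ + ... + ⌊k (r-1)/2⌋)(q-2)`; if all `k i` are even then
`reg G ≥ (k 0/2 + ... + k (r-1)/2 - 1)(q-2)`, where `q = |K|`. -/
theorem reg_parallelComp_same_parity_lower_bound
    (K : Type) [Field K] [Fintype K] (r : ℕ) (hr : 2 ≤ r)
    (k : Fin r → ℕ) (hk : ∀ i, 0 < k i)
    (hpar : ∀ i j, (Odd (k i) ↔ Odd (k j))) :
    ((∀ i, Odd (k i)) →
      (∑ i, k i / 2) * (Fintype.card K - 2) ≤ (parallelComp k).reg K) ∧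
    ((∀ i, Even (k i)) →
      ((∑ i, k i / 2) - 1) * (Fintype.card K - 2) ≤ (parallelComp k).reg K) := by
  constructor
  · intro hodd
    have hcard : Fintype.card (Option ((i : Fin r) × Fin (k i / 2))) - 1 = ∑ i, k i / 2 := by
      simp
    rw [← hcard]
    refine RegAux.main_bound K (parallelComp k)
      (fun e => if h : e.2.1 = 0 then none else
        some ⟨e.1, ⟨(e.2.1 + 1) / 2 - 1, by have := e.2.2; omega⟩⟩) ?_ ?_
    · rintro (_ | ⟨i, m⟩)
      · exact ⟨⟨⟨0, by omega⟩, ⟨0, hk _⟩⟩, by simp⟩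
      · have := m.2
        refine ⟨⟨i, ⟨2 * m.1 + 1, by omega⟩⟩, ?_⟩
        beta_reduce
        rw [dif_neg (by simp)]
        simp only [Option.some.injEq, Sigma.mk.injEq, heq_eq_eq, true_and]
        apply Fin.ext
        simp only
        omega
    · intro y
      refine ⟨fun v => match v with
        | Sum.inl false => y none
        | Sum.inl true => 1
        | Sum.inr ⟨i, m⟩ => if h : m.1 % 2 = 1 then
            y (some ⟨i, ⟨m.1 / 2, by have := m.2; omega⟩⟩) else 1, ?_⟩
      rintro ⟨i, j⟩
      have hj := j.2
      obtain ⟨w, hw⟩ := hodd i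
      simp only [parallelComp, pcVert]
      by_cases h0 : j.1 = 0
      · by_cases h1 : 1 < k i
        · simp [h0, h1]
        · simp [h0, h1]
      · by_cases h1 : j.1 + 1 < k i
        · by_cases h2 : j.1 % 2 = 0
          · have h3 : ¬ (j.1 % 2 = 1) := by omega
            have h4 : (j.1 - 1) % 2 = 1 := by omega
            have h5 : (j.1 - 1) / 2 = (j.1 + 1) / 2 - 1 := by omega
            simp [h0, h1, hj, h3, h4, h5]
          · have h3 : j.1 % 2 = 1 := by omega
            have h4 : ¬ ((j.1 - 1) % 2 = 1) := by omega
            have h5 : j.1 / 2 = (j.1 + 1) / 2 - 1 := by omega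
            simp [h0, h1, hj, h3, h4, h5]
        · have h4 : (j.1 - 1) % 2 = 1 := by omega
          have h5 : (j.1 - 1) / 2 = (j.1 + 1) / 2 - 1 := by omega
          simp [h0, h1, hj, h4, h5]
  · intro heven
    have hcard : Fintype.card ((i : Fin r) × Fin (k i / 2)) = ∑ i, k i / 2 := by
      simp
    rw [← hcard]
    refine RegAux.main_bound K (parallelComp k)
      (fun e => ⟨e.1, ⟨e.2.1 / 2, by have := e.2.2; obtain ⟨w, hw⟩ := heven e.1; omega⟩⟩) ?_ ?_
    · rintro ⟨i, m⟩
      have := m.2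
      refine ⟨⟨i, ⟨2 * m.1, by omega⟩⟩, ?_⟩
      simp only [Sigma.mk.injEq, heq_eq_eq, true_and]
      apply Fin.ext
      simp only
      omega
    · intro y
      refine ⟨fun v => match v with
        | Sum.inl _ => 1
        | Sum.inr ⟨i, m⟩ => if h : m.1 % 2 = 0 then
            y ⟨i, ⟨m.1 / 2, by have := m.2; omega⟩⟩ else 1, ?_⟩
      rintro ⟨i, j⟩
      have hj := j.2
      obtain ⟨w, hw⟩ := heven i
      simp only [parallelComp, pcVert]
      by_cases h0 : j.1 = 0
      · have h1 : 1 < k i := by omega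
        simp [h0, h1]
      · by_cases h1 : j.1 + 1 < k i
        · by_cases h2 : j.1 % 2 = 0
          · have h4 : ¬ ((j.1 - 1) % 2 = 0) := by omega
            simp [h0, h1, hj, h2, h4]
          · have h4 : (j.1 - 1) % 2 = 0 := by omega
            have h5 : (j.1 - 1) / 2 = j.1 / 2 := by omega
            simp [h0, h1, hj, h2, h4, h5]
        · have h4 : (j.1 - 1) % 2 = 0 := by omega
          have h5 : (j.1 - 1) / 2 = j.1 / 2 := by omega
          simp [h0, h1, hj, h4, h5]
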